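/- If c ∈ R^X has c_x ≥ 0 for all x ∈ X, then for every y ∈ R^X: σ_{c,y}(X) ≤ 1 − (1/μ^1) · [ ∑_{x∈X} P_x(y) c_x − (1/(2 μ^L)) ∑_{x∈X} P_x(y) c_x² ]. -/

import Mathlib

/-!
The argument is a descending induction on the level `l` of a class `C`, proving
`σ(C) ≤ 1 - (1 / μ (l + 1)) * ∑ x ∈ C, P_{x|C} * (c x - c x ^ 2 / (2 * μ L))`.
At level `L - 1` this is `exp (-t) ≤ 1 - t + t ^ 2 / 2` for `t ≥ 0`, averaged over the
probability vector `P_{·|C}`. At a higher level, the exponent `a = μ (l + 2) / μ (l + 1)` lies in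
`[0, 1]` because `μ` is decreasing, so Bernoulli's inequality `s ^ a ≤ 1 + a * (s - 1)` turns the
bound for each child into one with `μ (l + 1)` in place of `μ (l + 2)`. Averaging over the children
uses the tower rule `P_{x|C} = P_{C'|C} * P_{x|C'}` (`sum_condProb_mul`) and the fact that the
conditional choice probabilities of the children sum to one (`sum_childProb`).
-/

noncomputable section

namespace NestedBandits

/-- A similarity structure of depth `L ≥ 1` on a finite set `X`, encoded by the map
`cls l x` = the similarity class of level `l` containing `x`. -/
structure SimStruct (X : Type*) [Fintype X] [DecidableEq X] where
  L : ℕ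
  one_le_L : 1 ≤ L
  cls : ℕ → X → Finset X
  mem_cls : ∀ l x, x ∈ cls l x
  cls_zero : ∀ x, cls 0 x = Finset.univ
  cls_L : ∀ x, cls L x = {x}
  cls_congr : ∀ l x z, z ∈ cls l x → cls l z = cls l x
  cls_refines : ∀ l x, l < L → cls (l + 1) x ⊆ cls l x

variable {X : Type*} [Fintype X] [DecidableEq X]

/-- The probability `p_C` of a class `C`. -/
def pC (p : X → ℝ) (C : Finset X) : ℝ := ∑ x ∈ C, p x

/-- The simplex `Δ(X)` of probability vectors on `X`. -/
def simplex (X : Type*) [Fintype X] : Set (X → ℝ) :=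
  {p | (∀ x, 0 ≤ p x) ∧ ∑ x, p x = 1}

/-- `t * log t`, with the convention `0 * log 0 = 0` (automatic since `Real.log 0 = 0`). -/
def xlogx (t : ℝ) : ℝ := t * Real.log t

/-- Auxiliary class score: `k` is the number of levels below the class (so the class has
level `S.L - k`). -/
def scoreAux (S : SimStruct X) (μ : ℕ → ℝ) (y : X → ℝ) : ℕ → Finset X → ℝ
  | 0, C => ∑ x ∈ C, y x
  | k + 1, C =>
      μ (S.L - k) *
        Real.log (∑ C' ∈ C.image (S.cls (S.L - k)), Real.exp (scoreAux S μ y k C' / μ (S.L - k)))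

/-- The class score `y_C` of a class `C` of level `l`. -/
def score (S : SimStruct X) (μ : ℕ → ℝ) (y : X → ℝ) (l : ℕ) (C : Finset X) : ℝ :=
  scoreAux S μ y (S.L - l) C

/-- The nested choice probability `P_{x | C}(y)` where `C = S.cls l x` is the level-`l`
class of `x`: the product of the conditional choice probabilities along the chain of
classes from `C` down to `{x}`. -/
def condProb (S : SimStruct X) (μ : ℕ → ℝ) (y : X → ℝ) (l : ℕ) (x : X) : ℝ :=
  ∏ l' ∈ Finset.Ico l S.L,
    Real.exp ((score S μ y (l' + 1) (S.cls (l' + 1) x) - score S μ y l' (S.cls l' x)) / μ (l' + 1))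

/-- The nested entropy `h_C(p)` of a class `C` of level `l`. -/
def nestEnt (S : SimStruct X) (μ : ℕ → ℝ) (p : X → ℝ) (l : ℕ) (C : Finset X) : ℝ :=
  ∑ l' ∈ Finset.Icc (max l 1) S.L,
    (μ l' - μ (l' + 1)) * ∑ C' ∈ C.image (S.cls l'), xlogx (pC p C')

/-- The conditional entropy `h(p | C)` of a class `C` of level `l`. -/
def condEnt (S : SimStruct X) (μ : ℕ → ℝ) (p : X → ℝ) (l : ℕ) (C : Finset X) : ℝ :=
  if l < S.L then
    μ (l + 1) * ∑ C' ∈ C.image (S.cls (l + 1)), pC p C' * (Real.log (pC p C') - Real.log (pC p C))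
  else 0

/-- Auxiliary nested power sum: `k = S.L - l ≥ 1` levels below the class. -/
def npsAux (S : SimStruct X) (μ : ℕ → ℝ) (y c : X → ℝ) : ℕ → Finset X → ℝ
  | 0, _ => 0
  | 1, C => ∑ x ∈ C, condProb S μ y (S.L - 1) x * Real.exp (-c x / μ S.L)
  | k + 2, C =>
      ∑ C' ∈ C.image (S.cls (S.L - (k + 1))),
        Real.exp ((score S μ y (S.L - (k + 1)) C' - score S μ y (S.L - (k + 2)) C) /
            μ (S.L - (k + 1))) *
          npsAux S μ y c (k + 1) C' ^ (μ (S.L - k) / μ (S.L - (k + 1)))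

/-- The nested power sum `σ_{c,y}(C)` for a class `C` of level `l < S.L`. -/
def nps (S : SimStruct X) (μ : ℕ → ℝ) (y c : X → ℝ) (l : ℕ) (C : Finset X) : ℝ :=
  npsAux S μ y c (S.L - l) C

/-- The Fenchel coupling `F(p, y) = h(p) + y_X - ⟨y, p⟩`. -/
def fench (S : SimStruct X) (μ : ℕ → ℝ) (p y : X → ℝ) : ℝ :=
  nestEnt S μ p 0 Finset.univ + score S μ y 0 Finset.univ - ∑ x, y x * p x

/-- The effective number of alternatives `N_eff = (∑_l √(N^l) R̄_l)²`. -/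
def Neff (S : SimStruct X) (R : ℕ → Finset X → ℝ) : ℝ :=
  (∑ l ∈ Finset.Icc 1 S.L,
      Real.sqrt ((Finset.univ.image (S.cls l)).card) *
        Real.sqrt ((∑ C ∈ Finset.univ.image (S.cls l), R l C ^ 2) /
          ((Finset.univ.image (S.cls l)).card))) ^ 2

/-- The conditional choice probability `P_{C'|C}(y)` of a class `C'` of level `l + 1` inside a
class `C` of level `l`. -/
def childProb (S : SimStruct X) (μ : ℕ → ℝ) (y : X → ℝ) (l : ℕ) (C C' : Finset X) : ℝ :=
  Real.exp ((score S μ y (l + 1) C' - score S μ y l C) / μ (l + 1))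

lemma mu_pos (S : SimStruct X) (μ : ℕ → ℝ)
    (hμ_mono : ∀ l : ℕ, 1 ≤ l → l < S.L → μ (l + 1) ≤ μ l)
    (hμ_pos : 0 < μ S.L) {l : ℕ} (h1 : 1 ≤ l) (hl : l ≤ S.L) : 0 < μ l := by
  induction hl using Nat.decreasingInduction with
  | self => exact hμ_pos
  | of_succ k hk ih => exact (ih (by omega)).trans_le (hμ_mono k h1 hk)

lemma score_of_lt (S : SimStruct X) (μ : ℕ → ℝ) (y : X → ℝ) {l : ℕ} (hl : l < S.L)
    (C : Finset X) :
    score S μ y l C = μ (l + 1) * Real.log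
      (∑ C' ∈ C.image (S.cls (l + 1)), Real.exp (score S μ y (l + 1) C' / μ (l + 1))) := by
  obtain ⟨k, hk⟩ : ∃ k, S.L - l = k + 1 := ⟨S.L - l - 1, by omega⟩
  have h1 : S.L - (l + 1) = k := by omega
  have h2 : S.L - k = l + 1 := by omega
  simp only [score, hk, h1, scoreAux, h2]

lemma sum_childProb (S : SimStruct X) (μ : ℕ → ℝ) (y : X → ℝ) {l : ℕ} (hl : l < S.L)
    (hμ : 0 < μ (l + 1)) {C : Finset X} (hC : C.Nonempty) :
    ∑ C' ∈ C.image (S.cls (l + 1)), childProb S μ y l C C' = 1 := by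
  have hpos : 0 < ∑ C' ∈ C.image (S.cls (l + 1)),
      Real.exp (score S μ y (l + 1) C' / μ (l + 1)) :=
    Finset.sum_pos (fun _ _ => Real.exp_pos _) (hC.image _)
  simp only [childProb, sub_div, Real.exp_sub]
  rw [← Finset.sum_div, score_of_lt S μ y hl C, mul_div_cancel_left₀ _ hμ.ne', Real.exp_log hpos,
    div_self hpos.ne']

lemma condProb_of_lt (S : SimStruct X) (μ : ℕ → ℝ) (y : X → ℝ) {l : ℕ} (hl : l < S.L) (x : X) :
    condProb S μ y l x =
      childProb S μ y l (S.cls l x) (S.cls (l + 1) x) * condProb S μ y (l + 1) x := by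
  simp only [condProb, childProb]
  rw [← Finset.prod_Ioo_mul_eq_prod_Ico hl, mul_comm]
  rfl

lemma condProb_nonneg (S : SimStruct X) (μ : ℕ → ℝ) (y : X → ℝ) (l : ℕ) (x : X) :
    0 ≤ condProb S μ y l x :=
  Finset.prod_nonneg fun _ _ => (Real.exp_pos _).le

lemma filter_cls (S : SimStruct X) {l : ℕ} (hl : l < S.L) {z w : X} (hw : w ∈ S.cls l z) :
    (S.cls l z).filter (fun x => S.cls (l + 1) x = S.cls (l + 1) w) = S.cls (l + 1) w := by
  ext x
  simp only [Finset.mem_filter]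
  constructor
  · rintro ⟨-, h⟩
    exact h ▸ S.mem_cls (l + 1) x
  · intro h
    refine ⟨?_, S.cls_congr _ _ _ h⟩
    have := S.cls_refines l w hl h
    rwa [S.cls_congr l z w hw] at this

/-- Tower rule: an average over a class is the average over its children of their averages. -/
lemma sum_condProb_mul (S : SimStruct X) (μ : ℕ → ℝ) (y g : X → ℝ) {l : ℕ} (hl : l < S.L)
    (z : X) :
    ∑ x ∈ S.cls l z, condProb S μ y l x * g x =
      ∑ C' ∈ (S.cls l z).image (S.cls (l + 1)), childProb S μ y l (S.cls l z) C' *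
        ∑ x ∈ C', condProb S μ y (l + 1) x * g x := by
  rw [← Finset.sum_fiberwise_of_maps_to
    (fun x hx => Finset.mem_image_of_mem (S.cls (l + 1)) hx)]
  refine Finset.sum_congr rfl fun C' hC' => ?_
  obtain ⟨w, hw, rfl⟩ := Finset.mem_image.1 hC'
  rw [filter_cls S hl hw, Finset.mul_sum]
  refine Finset.sum_congr rfl fun x hx => ?_
  have hxz : S.cls l x = S.cls l z := by
    rw [S.cls_congr l w x (S.cls_refines l w hl hx), S.cls_congr l z w hw]
  rw [condProb_of_lt S μ y hl, S.cls_congr _ _ _ hx, hxz, mul_assoc]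

lemma sum_condProb (S : SimStruct X) (μ : ℕ → ℝ)
    (hμ : ∀ l, 1 ≤ l → l ≤ S.L → 0 < μ l) (y : X → ℝ) {l : ℕ} (hl : l ≤ S.L) (z : X) :
    ∑ x ∈ S.cls l z, condProb S μ y l x = 1 := by
  induction hl using Nat.decreasingInduction generalizing z with
  | self => simp [S.cls_L, condProb]
  | of_succ l hl ih =>
    have h := sum_condProb_mul S μ y (fun _ => 1) hl z
    simp only [mul_one] at h
    rw [h, ← sum_childProb S μ y hl (hμ (l + 1) (by omega) hl) ⟨z, S.mem_cls l z⟩]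
    refine Finset.sum_congr rfl fun C' hC' => ?_
    obtain ⟨w, -, rfl⟩ := Finset.mem_image.1 hC'
    rw [ih w, mul_one]

lemma nps_last (S : SimStruct X) (μ : ℕ → ℝ) (y c : X → ℝ) {l : ℕ} (hl : l + 1 = S.L)
    (C : Finset X) :
    nps S μ y c l C = ∑ x ∈ C, condProb S μ y l x * Real.exp (-c x / μ (l + 1)) := by
  have h : S.L - l = 1 := by omega
  have h' : S.L - 1 = l := by omega
  simp only [nps, h, npsAux, h', hl]

lemma nps_of_lt (S : SimStruct X) (μ : ℕ → ℝ) (y c : X → ℝ) {l : ℕ} (hl : l + 1 < S.L)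
    (C : Finset X) :
    nps S μ y c l C = ∑ C' ∈ C.image (S.cls (l + 1)), childProb S μ y l C C' *
      nps S μ y c (l + 1) C' ^ (μ (l + 2) / μ (l + 1)) := by
  obtain ⟨k, hk⟩ : ∃ k, S.L - l = k + 2 := ⟨S.L - l - 2, by omega⟩
  have h1 : S.L - (l + 1) = k + 1 := by omega
  have h2 : S.L - (k + 1) = l + 1 := by omega
  have h3 : S.L - (k + 2) = l := by omega
  have h4 : S.L - k = l + 2 := by omega
  simp only [nps, hk, h1, npsAux, h2, h3, h4, childProb]

lemma nps_nonneg (S : SimStruct X) (μ : ℕ → ℝ) (y c : X → ℝ) {l : ℕ} (hl : l + 1 ≤ S.L)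
    (C : Finset X) : 0 ≤ nps S μ y c l C := by
  obtain ⟨d, hd⟩ := Nat.exists_eq_add_of_le hl
  induction d generalizing l C with
  | zero =>
    rw [nps_last S μ y c (by omega)]
    exact Finset.sum_nonneg fun x _ =>
      mul_nonneg (condProb_nonneg S μ y l x) (Real.exp_pos _).le
  | succ d ih =>
    rw [nps_of_lt S μ y c (by omega)]
    exact Finset.sum_nonneg fun C' _ => mul_nonneg (Real.exp_pos _).le
      (Real.rpow_nonneg (ih (by omega) C' (by omega)) _)

lemma exp_neg_le {t : ℝ} (ht : 0 ≤ t) : Real.exp (-t) ≤ 1 - t + t ^ 2 / 2 := by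
  -- `(1 + t + t² / 2) (1 - t + t² / 2) = 1 + t⁴ / 4`
  have h := Real.quadratic_le_exp_of_nonneg ht
  have hp : 0 < 1 - t + t ^ 2 / 2 := by nlinarith [sq_nonneg (t - 1)]
  rw [Real.exp_neg, inv_le_comm₀ (Real.exp_pos t) hp]
  refine le_trans ?_ h
  rw [inv_le_iff_one_le_mul₀ hp]
  nlinarith [sq_nonneg (t ^ 2)]

/-- The bound at an arbitrary class of level below `S.L`. -/
lemma nps_le (S : SimStruct X) (μ : ℕ → ℝ)
    (hμ_mono : ∀ l : ℕ, 1 ≤ l → l < S.L → μ (l + 1) ≤ μ l)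
    (hμ : ∀ l, 1 ≤ l → l ≤ S.L → 0 < μ l)
    (c : X → ℝ) (hc : ∀ x, 0 ≤ c x) (y : X → ℝ) {l : ℕ} (hl : l + 1 ≤ S.L) (z : X) :
    nps S μ y c l (S.cls l z) ≤ 1 - (1 / μ (l + 1)) *
      ∑ x ∈ S.cls l z, condProb S μ y l x * (c x - 1 / (2 * μ S.L) * c x ^ 2) := by
  obtain ⟨d, hd⟩ := Nat.exists_eq_add_of_le hl
  have hm : 0 < μ (l + 1) := hμ (l + 1) (by omega) hl
  induction d generalizing l z with
  | zero =>
    have hL : l + 1 = S.L := by omega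
    rw [nps_last S μ y c hL, le_sub_iff_add_le, Finset.mul_sum, ← Finset.sum_add_distrib]
    refine (Finset.sum_le_sum fun x _ => ?_).trans
      (sum_condProb S μ hμ y (by omega : l ≤ S.L) z).le
    have h := mul_le_mul_of_nonneg_left (exp_neg_le (div_nonneg (hc x) hm.le))
      (condProb_nonneg S μ y l x)
    rw [neg_div, ← le_sub_iff_add_le]
    refine h.trans (le_of_eq ?_)
    rw [← hL]
    field_simp
    ring
  | succ d ih =>
    have hm2 : 0 < μ (l + 2) := hμ (l + 2) (by omega) (by omega)
    rw [nps_of_lt S μ y c (by omega), sum_condProb_mul S μ y _ (by omega : l < S.L),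
      le_sub_iff_add_le, Finset.mul_sum, ← Finset.sum_add_distrib]
    refine (Finset.sum_le_sum fun C' hC' => ?_).trans
      (sum_childProb S μ y (by omega : l < S.L) hm ⟨z, S.mem_cls l z⟩).le
    obtain ⟨w, -, rfl⟩ := Finset.mem_image.1 hC'
    have hi := ih (l := l + 1) (by omega) w (by omega) hm2
    have h0 := nps_nonneg S μ y c (l := l + 1) (by omega) (S.cls (l + 1) w)
    set s := nps S μ y c (l + 1) (S.cls (l + 1) w)
    set A := ∑ x ∈ S.cls (l + 1) w,
      condProb S μ y (l + 1) x * (c x - 1 / (2 * μ S.L) * c x ^ 2)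
    have ha0 : 0 ≤ μ (l + 2) / μ (l + 1) := by positivity
    have ha1 : μ (l + 2) / μ (l + 1) ≤ 1 :=
      (div_le_one hm).2 (hμ_mono (l + 1) (by omega) (by omega))
    have hb := rpow_one_add_le_one_add_mul_self (s := s - 1) (by linarith) ha0 ha1
    rw [add_sub_cancel] at hb
    have hs : μ (l + 2) / μ (l + 1) * (s - 1) ≤ μ (l + 2) / μ (l + 1) * (-(1 / μ (l + 2) * A)) :=
      mul_le_mul_of_nonneg_left (by linarith) ha0
    have he : μ (l + 2) / μ (l + 1) * (-(1 / μ (l + 2) * A)) = -(1 / μ (l + 1) * A) := by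
      field_simp
    have hfin : s ^ (μ (l + 2) / μ (l + 1)) ≤ 1 - 1 / μ (l + 1) * A := by linarith
    have hP : 0 ≤ childProb S μ y l (S.cls l z) (S.cls (l + 1) w) := (Real.exp_pos _).le
    rw [← le_sub_iff_add_le]
    exact (mul_le_mul_of_nonneg_left hfin hP).trans (le_of_eq (by ring))

theorem stmt6 (S : SimStruct X) (μ : ℕ → ℝ)
    (hμ_mono : ∀ l : ℕ, 1 ≤ l → l < S.L → μ (l + 1) ≤ μ l)
    (hμ_pos : 0 < μ S.L) (hμ_last : μ (S.L + 1) = 0)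
    (c : X → ℝ) (hc : ∀ x, 0 ≤ c x) (y : X → ℝ) :
    nps S μ y c 0 Finset.univ ≤
      1 - (1 / μ 1) *
        ((∑ x, condProb S μ y 0 x * c x) -
          (1 / (2 * μ S.L)) * ∑ x, condProb S μ y 0 x * c x ^ 2) := by
  have hμ : ∀ l, 1 ≤ l → l ≤ S.L → 0 < μ l := fun l h1 h2 => mu_pos S μ hμ_mono hμ_pos h1 h2
  rcases isEmpty_or_nonempty X with hX | ⟨⟨z⟩⟩
    -- For empty `X` every sum is zero and the claim reads `0 ≤ 1`.
  · have h : nps S μ y c 0 Finset.univ = 0 := by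
      rcases Nat.lt_or_ge 1 S.L with h | h
      · rw [nps_of_lt S μ y c h]
        simp
      · rw [nps_last S μ y c (le_antisymm S.one_le_L h)]
        simp
    rw [h]
    simp
  · have h := nps_le S μ hμ_mono hμ c hc y (l := 0) S.one_le_L z
    rw [S.cls_zero] at h
    refine h.trans (le_of_eq ?_)
    rw [Finset.mul_sum (a := 1 / (2 * μ S.L)), ← Finset.sum_sub_distrib]
    congr 2
    exact Finset.sum_congr rfl fun x _ => by ring

end NestedBandits
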